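/- arXiv:1812.08993 — 3 statements merged into one kernel-verified Lean document; each statement's English description precedes it below -/
import Mathlib

section
/- Let q be a prime power, m ≥ 1, and let V be an F_q-subspace of F_{q^m} of dimension t ≤ m-1. Let G be a subgroup of the multiplicative group F_q^* of order r. Then there exist elements α_1 = 0, α_2, ..., α_ℓ in F_{q^m} with ℓ = 1 + (q^{m-t} - 1)/r such that the cosets V together with {α_i·g + V : 2 ≤ i ≤ ℓ, g ∈ G} are 1 + (ℓ-1)·r = q^{m-t} pairwise distinct cosets of V (and hence partition F_{q^m}). -/
open Polynomial Finset
open scoped Classical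

/-- The (additive) coset `a + V` of a set `V`. -/
def coset {K : Type*} [Add K] (V : Set K) (a : K) : Set K := {x | ∃ v ∈ V, x = a + v}

theorem orbit_reps {F Q : Type*} [Field F] [Finite F] [AddCommGroup Q] [Module F Q] [Finite Q]
    (H : Subgroup Fˣ) :
    ∃ n : ℕ, n * Nat.card H + 1 = Nat.card Q ∧ ∃ β : Fin n → Q,
      (∀ i, β i ≠ 0) ∧
      (∀ i j (h h' : H), (h : Fˣ) • β i = (h' : Fˣ) • β j → i = j ∧ h = h') ∧
      (∀ x : Q, x ≠ 0 → ∃ i, ∃ h : H, x = (h : Fˣ) • β i) := by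
  let act : MulAction H {x : Q // x ≠ 0} :=
    { smul := fun h x => ⟨(h : Fˣ) • (x : Q), by
        intro h0
        exact x.2 ((smul_eq_zero_iff_eq (h : Fˣ)).1 h0)⟩
      one_smul := fun x => Subtype.ext (one_smul Fˣ (x : Q))
      mul_smul := fun a b x => Subtype.ext (mul_smul (a : Fˣ) (b : Fˣ) (x : Q)) }
  have hsm : ∀ (h : H) (x : {x : Q // x ≠ 0}), ((h • x : {x : Q // x ≠ 0}) : Q) = (h : Fˣ) • (x : Q) :=
    fun h x => rfl
  have free : ∀ (h h' : H) (x : Q), x ≠ 0 → (h : Fˣ) • x = (h' : Fˣ) • x → h = h' := by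
    intro h h' x hx he
    have h1 : ((h : Fˣ) : F) • x = ((h' : Fˣ) : F) • x := he
    exact Subtype.ext (Units.ext (smul_left_injective F hx h1))
  have hst : ∀ x : {x : Q // x ≠ 0}, MulAction.stabilizer H x = ⊥ := by
    intro x
    rw [eq_bot_iff]
    intro h hh
    rw [MulAction.mem_stabilizer_iff] at hh
    rw [Subgroup.mem_bot]
    apply free h 1 x x.2
    rw [← hsm, ← hsm, hh, one_smul]
  let Ω := MulAction.orbitRel.Quotient H {x : Q // x ≠ 0}
  have e : {x : Q // x ≠ 0} ≃ Ω × H := MulAction.selfEquivOrbitsQuotientProd hst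
  have hc := Nat.card_congr e
  rw [Nat.card_prod] at hc
  have hfin : Finite Ω := Quotient.finite _
  have hX : Nat.card {x : Q // x ≠ 0} + 1 = Nat.card Q := by
    have := Fintype.ofFinite Q
    rw [Nat.card_eq_fintype_card, Nat.card_eq_fintype_card, Fintype.card_subtype_compl,
      Fintype.card_subtype_eq]
    have : 0 < Fintype.card Q := Fintype.card_pos
    omega
  let f : Fin (Nat.card Ω) ≃ Ω := (Finite.equivFin Ω).symm
  refine ⟨Nat.card Ω, by rw [← hc, hX], fun i => ((f i).out : {x : Q // x ≠ 0}), fun i => (f i).out.2, ?_, ?_⟩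
  · intro i j h h' he
    have he' : h • (f i).out = h' • (f j).out := Subtype.ext he
    have hij : i = j := by
      apply f.injective
      rw [← (f i).out_eq, ← (f j).out_eq]
      apply Quotient.sound
      refine ⟨h⁻¹ * h', ?_⟩
      change (h⁻¹ * h') • (f j).out = (f i).out
      rw [mul_smul, ← he', inv_smul_smul]
    subst hij
    exact ⟨rfl, free h h' _ (f i).out.2 he⟩
  · intro x hx
    let y : Ω := Quotient.mk _ ⟨x, hx⟩
    have hy : MulAction.orbitRel H {x : Q // x ≠ 0} y.out ⟨x, hx⟩ := Quotient.mk_out _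
    obtain ⟨h, hh⟩ := (MulAction.orbitRel H {x : Q // x ≠ 0}).symm hy
    refine ⟨f.symm y, h, ?_⟩
    beta_reduce
    rw [Equiv.apply_symm_apply]
    exact (congrArg Subtype.val hh).symm

theorem coset_eq_iff' {F K : Type*} [Field F] [Field K] [Algebra F K] (V : Submodule F K) (a b : K) :
    coset (V : Set K) a = coset (V : Set K) b ↔ V.mkQ a = V.mkQ b := by
  have hm : ∀ a x, x ∈ coset (V : Set K) a ↔ V.mkQ x = V.mkQ a := by
    intro a x
    rw [Submodule.mkQ_apply, Submodule.mkQ_apply, Submodule.Quotient.eq]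
    constructor
    · rintro ⟨v, hv, rfl⟩
      simpa using hv
    · intro h
      exact ⟨x - a, h, by ring⟩
  constructor
  · intro h
    rw [← hm, ← h, hm]
  · intro h
    ext x
    rw [hm, hm, h]

/-- existence of coset representatives `α_1 = 0, α_2, …, α_ℓ` such that
`V` together with the cosets `α_i g + V` (`2 ≤ i ≤ ℓ`, `g ∈ G`) are
`1 + (ℓ-1) r = q^{m-t}` pairwise distinct cosets of `V`, partitioning `F_{q^m}`. -/
theorem stmt0 (q r m t : ℕ) (hq : IsPrimePow q) (hm : 1 ≤ m) (ht : t ≤ m - 1)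
    (hr : r ∣ q - 1)
    (Fq K : Type*) [Field Fq] [Fintype Fq] [Field K] [Fintype K] [Algebra Fq K]
    (hcq : Fintype.card Fq = q) (hcK : Fintype.card K = q ^ m)
    (V : Submodule Fq K) (hV : Module.finrank Fq V = t)
    (G : Subgroup Kˣ) (hG : Nat.card G = r)
    (hGsub : ∀ g : G, ∃ a : Fq, algebraMap Fq K a = ((g : Kˣ) : K)) :
    ((q ^ (m - t) - 1) / r) * r + 1 = q ^ (m - t) ∧
    ∃ α : Fin ((q ^ (m - t) - 1) / r + 1) → K,
      α 0 = 0 ∧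
      (∀ (i : Fin ((q ^ (m - t) - 1) / r + 1)) (g : G), i ≠ 0 →
        coset (V : Set K) (α i * ((g : Kˣ) : K)) ≠ coset (V : Set K) 0) ∧
      (∀ (i j : Fin ((q ^ (m - t) - 1) / r + 1)) (gi gj : G), i ≠ 0 → j ≠ 0 →
        coset (V : Set K) (α i * ((gi : Kˣ) : K)) = coset (V : Set K) (α j * ((gj : Kˣ) : K)) →
        i = j ∧ gi = gj) ∧
      (⋃ i, ⋃ g : G, coset (V : Set K) (α i * ((g : Kˣ) : K))) = Set.univ := by
  have hq2 : 2 ≤ q := hq.two_le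
  let H : Subgroup Fqˣ := G.comap (Units.map (algebraMap Fq K : Fq →* K))
  have hinj : Function.Injective (algebraMap Fq K) := (algebraMap Fq K).injective
  have hlift : ∀ g : G, ∃ h : H, algebraMap Fq K ((h : Fqˣ) : Fq) = ((g : Kˣ) : K) := by
    intro g
    obtain ⟨a, ha⟩ := hGsub g
    have ha0 : a ≠ 0 := by
      rintro rfl
      rw [map_zero] at ha
      exact (g : Kˣ).ne_zero ha.symm
    refine ⟨⟨Units.mk0 a ha0, ?_⟩, ha⟩
    have : Units.map (algebraMap Fq K : Fq →* K) (Units.mk0 a ha0) = g := Units.ext ha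
    rw [Subgroup.mem_comap, this]
    exact g.2
  choose φ hφ using hlift
  have hφi : Function.Injective φ := by
    intro a b hab
    apply Subtype.ext
    apply Units.ext
    rw [← hφ, ← hφ, hab]
  have hφs : Function.Surjective φ := by
    intro h
    refine ⟨⟨Units.map (algebraMap Fq K : Fq →* K) h, h.2⟩, ?_⟩
    apply Subtype.ext
    apply Units.ext
    apply hinj
    rw [hφ]
    rfl
  have hH : Nat.card H = r := by
    rw [← hG]
    exact (Nat.card_congr (Equiv.ofBijective φ ⟨hφi, hφs⟩)).symm
  have : Finite (K ⧸ V) := Quotient.finite _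
  have hQ : Nat.card (K ⧸ V) = q ^ (m - t) := by
    have h1 : Nat.card (K ⧸ V) = q ^ Module.finrank Fq (K ⧸ V) := by
      rw [Module.natCard_eq_pow_finrank (K := Fq), Nat.card_eq_fintype_card, hcq]
    have h2 : Fintype.card K = q ^ Module.finrank Fq K := by
      rw [Module.card_eq_pow_finrank (K := Fq), hcq]
    have h3 : m = Module.finrank Fq K := Nat.pow_right_injective hq2 (hcK.symm.trans h2)
    have h4 := V.finrank_quotient_add_finrank
    rw [h1]
    congr 1
    omega
  obtain ⟨n, hn, β, hβ0, hβi, hβs⟩ := orbit_reps (Q := K ⧸ V) H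
  rw [hH, hQ] at hn
  have hr0 : 0 < r := hG ▸ Nat.card_pos
  have hdiv : (q ^ (m - t) - 1) / r = n := by
    rw [← hn, Nat.add_sub_cancel, Nat.mul_div_cancel _ hr0]
  rw [hdiv]
  refine ⟨hn, ?_⟩
  choose γ hγ using fun i => V.mkQ_surjective (β i)
  have hmk : ∀ i (g : G), V.mkQ (γ i * ((g : Kˣ) : K)) = (φ g : Fqˣ) • β i := by
    intro i g
    rw [← hγ, ← hφ, mul_comm, ← Algebra.smul_def, map_smul]
    rfl
  refine ⟨Fin.cons 0 γ, rfl, ?_, ?_, ?_⟩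
  · intro i g hi
    obtain ⟨i, rfl⟩ := Fin.exists_succ_eq.2 hi
    rw [Fin.cons_succ, Ne, coset_eq_iff', hmk, map_zero]
    intro h0
    exact hβ0 i ((smul_eq_zero_iff_eq _).1 h0)
  · intro i j gi gj hi hj
    obtain ⟨i, rfl⟩ := Fin.exists_succ_eq.2 hi
    obtain ⟨j, rfl⟩ := Fin.exists_succ_eq.2 hj
    rw [Fin.cons_succ, Fin.cons_succ, coset_eq_iff', hmk, hmk]
    intro h
    obtain ⟨h1, h2⟩ := hβi _ _ _ _ h
    exact ⟨by rw [h1], hφi h2⟩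
  · rw [Set.eq_univ_iff_forall]
    intro x
    have hself : ∀ y, V.mkQ x = V.mkQ y → x ∈ coset (V : Set K) y := by
      intro y hy
      rw [← (coset_eq_iff' V x y).2 hy]
      exact ⟨0, V.zero_mem, by simp⟩
    simp only [Set.mem_iUnion]
    by_cases hx : V.mkQ x = 0
    · refine ⟨0, 1, hself _ ?_⟩
      rw [Fin.cons_zero, zero_mul, map_zero, hx]
    · obtain ⟨i, h, hh⟩ := hβs _ hx
      obtain ⟨g, rfl⟩ := hφs h
      refine ⟨i.succ, g, hself _ ?_⟩
      rw [Fin.cons_succ, hmk, hh]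
end

section
/- Suppose there exists a (q^m − 1, e, r·q^t; e+1) FHS set with e = (q^{m-t}−1)/r achieving the Peng–Fan bound, and an (n, s; v) one-coincidence sequence set with s > q^m − q^t − 1. If ⌈(n(q^m−1)e − v(e+1)) / (n(q^m−1)e − 1) · (n(q^m−1)) / (v(e+1))⌉ = ⌈((q^m−1)e − (e+1)) / ((q^m−1)e − 1) · (q^m−1)/(e+1)⌉, then there exists an optimal (n(q^m−1), e, r·q^t; v(e+1)) FHS set achieving the Peng–Fan bound. -/
open Polynomial Finset
open scoped Classical

/-- Hamming correlation at delay `τ` of two length-`N` sequences (indices mod `N`). -/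
def Hcorr {A : Type*} [DecidableEq A] {N : ℕ} (x y : Fin N → A) (τ : Fin N) : ℕ :=
  (Finset.univ.filter fun k => x k = y (k + τ)).card

/-- Maximum Hamming correlation of an FHS set `s` (autocorrelations at nonzero delays
and crosscorrelations at all delays). -/
def HmMax {A : Type*} [DecidableEq A] {M N : ℕ} (s : Fin M → Fin N → A) : ℕ :=
  Finset.univ.sup fun p : Fin M × Fin M × Fin N =>
    if p.1 = p.2.1 ∧ (p.2.2 : ℕ) = 0 then 0 else Hcorr (s p.1) (s p.2.1) p.2.2

lemma HmMax_le_iff {A : Type*} [DecidableEq A] {M N : ℕ} (S : Fin M → Fin N → A) (b : ℕ) :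
    HmMax S ≤ b ↔ ∀ i j (τ : Fin N), ¬ (i = j ∧ (τ : ℕ) = 0) → Hcorr (S i) (S j) τ ≤ b := by
  unfold HmMax
  rw [Finset.sup_le_iff]
  constructor
  · intro h i j τ hn
    have := h (i, j, τ) (Finset.mem_univ _)
    simpa only [if_neg hn] using this
  · rintro h ⟨i, j, τ⟩ -
    dsimp only
    split_ifs with hc
    · exact Nat.zero_le _
    · exact h i j τ hc

/-- sum of all correlations -/
lemma sum_Hcorr {D : Type*} [Fintype D] [DecidableEq D] {M L : ℕ} [NeZero L]
    (X : Fin M → Fin L → D) :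
    ∑ p : Fin M × Fin M × Fin L, Hcorr (X p.1) (X p.2.1) p.2.2 =
      ∑ a : D, (∑ p : Fin M × Fin L, if X p.1 p.2 = a then 1 else 0) ^ 2 := by
  have h1 : ∀ a : D, (∑ p : Fin M × Fin L, if X p.1 p.2 = a then 1 else 0) ^ 2
      = ∑ p : Fin M × Fin L, ∑ p' : Fin M × Fin L,
        if X p.1 p.2 = a ∧ X p'.1 p'.2 = a then 1 else 0 := by
    intro a
    rw [sq, Finset.sum_mul_sum]
    refine Finset.sum_congr rfl fun p _ => Finset.sum_congr rfl fun p' _ => ?_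
    by_cases h : X p.1 p.2 = a <;> by_cases h' : X p'.1 p'.2 = a <;> simp [h, h']
  have h2 : ∑ a : D, (∑ p : Fin M × Fin L, if X p.1 p.2 = a then 1 else 0) ^ 2
      = ∑ p : Fin M × Fin L, ∑ p' : Fin M × Fin L,
        if X p.1 p.2 = X p'.1 p'.2 then 1 else 0 := by
    simp_rw [h1]
    rw [Finset.sum_comm]
    refine Finset.sum_congr rfl fun p _ => ?_
    rw [Finset.sum_comm]
    refine Finset.sum_congr rfl fun p' _ => ?_
    by_cases h : X p.1 p.2 = X p'.1 p'.2
    · simp [h]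
    · rw [if_neg h]
      apply Finset.sum_eq_zero
      intro a _
      rw [if_neg]
      rintro ⟨h1, h2⟩
      exact h (h1.trans h2.symm)
  rw [h2]
  simp only [Fintype.sum_prod_type, Hcorr, Finset.card_filter]
  refine Finset.sum_congr rfl fun i _ => ?_
  rw [Finset.sum_comm (s := (Finset.univ : Finset (Fin L)))]
  refine Finset.sum_congr rfl fun j _ => ?_
  rw [Finset.sum_comm]
  refine Finset.sum_congr rfl fun k _ => ?_
  exact Equiv.sum_comp (Equiv.addLeft k) (fun k' => if X i k = X j k' then 1 else 0)

lemma peng_fan {D : Type*} [Fintype D] [DecidableEq D] {M L : ℕ} [NeZero L]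
    (X : Fin M → Fin L → D) :
    (M * L) ^ 2 + Fintype.card D * (M * HmMax X) ≤
      Fintype.card D * (M * L + M * M * L * HmMax X) := by
  set b := HmMax X with hb
  have hle := (HmMax_le_iff X b).1 le_rfl
  have h1 : ∀ p : Fin M × Fin M × Fin L, Hcorr (X p.1) (X p.2.1) p.2.2 +
      (if p.1 = p.2.1 ∧ p.2.2 = 0 then b else 0) ≤
      (if p.1 = p.2.1 ∧ p.2.2 = 0 then L else 0) + b := by
    rintro ⟨i, j, τ⟩
    dsimp only
    split_ifs with hc
    · gcongr
      unfold Hcorr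
      exact (Finset.card_le_univ _).trans (by simp)
    · have := hle i j τ (fun h => hc ⟨h.1, Fin.ext (by rw [h.2]; simp)⟩)
      omega
  have hcnt : ∀ c : ℕ, ∑ p : Fin M × Fin M × Fin L,
      (if p.1 = p.2.1 ∧ p.2.2 = 0 then c else 0) = M * c := by
    intro c
    simp only [Fintype.sum_prod_type, ite_and]
    simp
  have h2 := Finset.sum_le_sum (fun p (_ : p ∈ Finset.univ) => h1 p)
  rw [Finset.sum_add_distrib, Finset.sum_add_distrib, hcnt, hcnt, sum_Hcorr] at h2
  have h3 : (∑ a : D, ∑ p : Fin M × Fin L, if X p.1 p.2 = a then 1 else 0) = M * L := by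
    rw [Finset.sum_comm]
    simp
  have h4 := sq_sum_le_card_mul_sum_sq (s := (Finset.univ : Finset D))
    (f := fun a => ∑ p : Fin M × Fin L, if X p.1 p.2 = a then 1 else 0)
  rw [h3, Finset.card_univ] at h4
  have h5 := Nat.mul_le_mul_left (Fintype.card D) h2
  have h6 : ∑ _x : Fin M × Fin M × Fin L, b = M * (M * L) * b := by simp
  rw [h6] at h5
  simp only [Nat.cast_id] at h4
  nlinarith

lemma recursive_lemma {A B : Type*} [DecidableEq A] [DecidableEq B] {M N n s : ℕ}
    [NeZero N] [NeZero n] (S : Fin M → Fin N → A) (b : ℕ)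
    (hS : ∀ i j (τ : Fin N), ¬ (i = j ∧ (τ : ℕ) = 0) → Hcorr (S i) (S j) τ ≤ b)
    (hap : ∀ a, (Finset.univ.filter fun p : Fin M × Fin N => S p.1 p.2 = a).card ≤ s)
    (C : Fin s → Fin n → B) (hCinj : Function.Injective C)
    (hCnonrep : ∀ i : Fin s, Function.Injective (C i))
    (hCcross : ∀ i j : Fin s, i ≠ j → ∀ τ : Fin n, Hcorr (C i) (C j) τ ≤ 1) :
    ∃ X : Fin M → Fin (n * N) → A × B, Function.Injective X ∧
      ∀ i j (τ : Fin (n * N)), ¬ (i = j ∧ (τ : ℕ) = 0) → Hcorr (X i) (X j) τ ≤ b := by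
  have hidx : ∃ idx : Fin M × Fin N → Fin s, ∀ p p', S p.1 p.2 = S p'.1 p'.2 →
      idx p = idx p' → p = p' := by
    have : ∀ a, Nonempty ({p : Fin M × Fin N // S p.1 p.2 = a} ↪ Fin s) := by
      intro a
      apply Function.Embedding.nonempty_of_card_le
      rw [Fintype.card_subtype, Fintype.card_fin]
      exact hap a
    let f := fun a => Classical.choice (this a)
    refine ⟨fun p => f (S p.1 p.2) ⟨p, rfl⟩, ?_⟩
    intro p p' h1 h2
    have key : ∀ a (h : S p.1 p.2 = a), f (S p.1 p.2) ⟨p, rfl⟩ = f a ⟨p, h⟩ := by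
      rintro a rfl; rfl
    dsimp only at h2
    rw [key _ h1] at h2
    simpa using (f _).injective h2
  obtain ⟨idx, hidx⟩ := hidx
  let X : Fin M → Fin (n * N) → A × B := fun i k =>
    (S i k.modNat, C (idx (i, k.modNat)) k.divNat)
  have hXp : ∀ i (x : Fin n × Fin N), X i (finProdFinEquiv x) =
      (S i x.2, C (idx (i, x.2)) x.1) := by
    intro i x
    have := finProdFinEquiv.symm_apply_apply x
    simp only [finProdFinEquiv_symm_apply] at this
    dsimp only [X ]
    rw [show (finProdFinEquiv x).modNat = x.2 from congrArg Prod.snd this,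
      show (finProdFinEquiv x).divNat = x.1 from congrArg Prod.fst this]
  refine ⟨X, ?_, ?_⟩
  · intro i j hij
    have h0 : ∀ k : Fin n, S i 0 = S j 0 ∧ C (idx (i, 0)) k = C (idx (j, 0)) k := by
      intro k
      have := congrFun hij (finProdFinEquiv (k, 0))
      rw [hXp, hXp] at this
      simpa using this
    have h1 := hCinj (funext fun k => (h0 k).2)
    have := hidx _ _ (h0 0).1 h1
    simpa using this
  · intro i j τ hτ
    -- additive structure
    have hNpos : 0 < N := Nat.pos_of_ne_zero (NeZero.ne N)
    have hnpos : 0 < n := Nat.pos_of_ne_zero (NeZero.ne n)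
    have : NeZero (n * N) := ⟨(Nat.mul_pos hnpos hNpos).ne'⟩
    have hmod : ∀ k : Fin (n * N), (k + τ).modNat = k.modNat + τ.modNat := by
      intro k
      apply Fin.ext
      simp only [Fin.coe_modNat, Fin.val_add]
      rw [Nat.mod_mod_of_dvd _ (Dvd.intro_left n rfl), Nat.add_mod]
    have hdiv : ∀ r : Fin N, ∃ δ : Fin n, ∀ k : Fin (n * N), k.modNat = r →
        (k + τ).divNat = k.divNat + δ := by
      intro r
      refine ⟨Fin.ofNat n ((r + τ) / N), ?_⟩
      intro k hk
      apply Fin.ext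
      have hr : (k : ℕ) % N = r := by rw [← hk]; rfl
      have e1 : (k : ℕ) + τ = N * (k / N) + (r + τ) := by
        rw [← hr]
        have := Nat.div_add_mod (k : ℕ) N
        omega
      simp only [Fin.coe_divNat, Fin.val_add, Fin.val_ofNat, Nat.add_mod_mod]
      rw [e1, Nat.mod_mul_left_div_self, Nat.mul_add_div hNpos]
    choose δ hδ using hdiv
    by_cases hcase : i = j ∧ τ.modNat = 0
    · obtain ⟨rfl, hτ0⟩ := hcase
      have : Hcorr (X i) (X i) τ = 0 := by
        unfold Hcorr
        rw [Finset.card_eq_zero, Finset.filter_eq_empty_iff]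
        intro k _ hk
        simp only [X, Prod.mk.injEq, hmod, hτ0, add_zero] at hk
        have h1 := hCnonrep _ hk.2
        have h2 : k = k + τ := finProdFinEquiv.symm.injective
          (Prod.ext h1 (by simp [hmod, hτ0]))
        have h3 : τ = 0 := by simpa using h2
        exact hτ ⟨rfl, by simp [h3]⟩
      omega
    · have hb := hS i j τ.modNat (fun h => hcase ⟨h.1, Fin.ext h.2⟩)
      refine le_trans ?_ hb
      unfold Hcorr
      refine Finset.card_le_card_of_injOn (fun k => k.modNat) ?_ ?_
      · intro k hk
        simp only [X, Prod.mk.injEq, hmod, Finset.coe_filter, Finset.mem_univ, true_and,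
          Set.mem_ofPred_eq] at hk ⊢
        exact hk.1
      · intro k hk k' hk' hkk
        simp only [X, Prod.mk.injEq, hmod, Finset.coe_filter, Finset.mem_univ, true_and,
          Set.mem_ofPred_eq] at hk hk' hkk
        rw [hδ _ k rfl] at hk
        rw [hδ _ k' rfl, ← hkk] at hk'
        have hne : idx (i, k.modNat) ≠ idx (j, k.modNat + τ.modNat) := by
          intro h
          have := hidx _ _ hk.1 h
          simp only [Prod.mk.injEq] at this
          exact hcase ⟨this.1, by simpa using this.2⟩
        have hle := hCcross _ _ hne (δ k.modNat)
        unfold Hcorr at hle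
        rw [Finset.card_le_one] at hle
        have := hle k.divNat (by simpa using hk.2) k'.divNat (by simpa using hk'.2)
        exact finProdFinEquiv.symm.injective (Prod.ext this hkk)

/-- The class map of a finite vector space modulo a scalar group of order `r`. -/
lemma exists_classes (F V : Type) [Field F] [Fintype F] [AddCommGroup V] [Module F V] [Fintype V]
    (r e : ℕ) (hr : r ∣ Fintype.card F - 1) (hr2 : 2 ≤ r) (hV : Fintype.card V = e * r + 1)
    (A : Type*) [Fintype A] (hA : Fintype.card A = e + 1) :
    ∃ (G : Finset F) (cls : V → A) (u : Fin e → V), G.card = r ∧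
      (∀ x y, cls x = cls y → ∃ g ∈ G, x = g • y) ∧
      (∀ i, u i ≠ 0) ∧ (∀ g ∈ G, ∀ i j, u i = g • u j → i = j) := by
  obtain ⟨ζ, hζ⟩ := IsCyclic.exists_ofOrder_eq_natCard (α := Fˣ)
  have hcardU : Nat.card Fˣ = Fintype.card F - 1 := by
    rw [Nat.card_eq_fintype_card, Fintype.card_units]
  have hF : 0 < Fintype.card F - 1 := by
    have := Fintype.one_lt_card (α := F); omega
  obtain ⟨d, hd⟩ := hr
  have hd0 : d ≠ 0 := by rintro rfl; omega
  have hord : orderOf (ζ ^ d) = r := by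
    rw [orderOf_pow_of_dvd hd0 (by rw [hζ, hcardU, hd]; exact Dvd.intro_left r rfl), hζ, hcardU, hd]
    exact Nat.mul_div_cancel _ (Nat.pos_of_ne_zero hd0)
  let H : Subgroup Fˣ := Subgroup.zpowers (ζ ^ d)
  have hH : Fintype.card H = r := by
    rw [← Nat.card_eq_fintype_card, Nat.card_zpowers, hord]
  let Q := MulAction.orbitRel.Quotient H V
  let mk : V → Q := Quotient.mk _
  have hmk : ∀ x y : V, mk x = mk y ↔ ∃ g : H, g • y = x := by
    intro x y
    exact Quotient.eq
  have hsm : ∀ (g : H) (v : V), g • v = ((g : Fˣ) : F) • v := fun g v => rfl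
  have hinj : ∀ (g g' : H) (v : V), v ≠ 0 → g • v = g' • v → g = g' := by
    intro g g' v hv h
    rw [hsm, hsm] at h
    have := smul_left_injective F hv h
    exact Subtype.ext (Units.ext this)
  have hQ : Fintype.card Q = e + 1 := by
    have h1 : Fintype.card V = ∑ c : Q, (Finset.univ.filter fun x => mk x = c).card := by
      rw [← Finset.card_univ]
      exact Finset.card_eq_sum_card_fiberwise (fun _ _ => Finset.mem_coe.2 (Finset.mem_univ _))
    have h0 : (Finset.univ.filter fun x => mk x = mk 0).card = 1 := by
      rw [Finset.card_eq_one]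
      refine ⟨0, ?_⟩
      ext x
      simp only [Finset.mem_filter, Finset.mem_univ, true_and, Finset.mem_singleton, hmk, smul_zero]
      exact ⟨fun ⟨_, h⟩ => h.symm, fun h => ⟨1, h.symm⟩⟩
    have hne : ∀ c : Q, c ≠ mk 0 → (Finset.univ.filter fun x => mk x = c).card = r := by
      intro c hc
      obtain ⟨y, rfl⟩ : ∃ y, mk y = c := Quotient.exists_rep c
      have hy : y ≠ 0 := by rintro rfl; exact hc rfl
      rw [← hH, ← Finset.card_univ]
      symm
      refine Finset.card_bij (fun g _ => g • y) ?_ ?_ ?_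
      · intro g _
        simp only [Finset.mem_filter, Finset.mem_univ, true_and, hmk]
        exact ⟨g, rfl⟩
      · intro g _ g' _ h
        exact hinj g g' y hy h
      · intro x hx
        simp only [Finset.mem_filter, Finset.mem_univ, true_and, hmk] at hx
        obtain ⟨g, hg⟩ := hx
        exact ⟨g, Finset.mem_univ _, hg⟩
    rw [← Finset.add_sum_erase _ _ (Finset.mem_univ (mk 0)), h0,
      Finset.sum_congr rfl (g := fun _ => r) (fun c hc => hne c (Finset.ne_of_mem_erase hc)),
      Finset.sum_const, Finset.card_erase_of_mem (Finset.mem_univ _), Finset.card_univ, hV,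
      smul_eq_mul] at h1
    have h2 : e * r = (Fintype.card Q - 1) * r := by omega
    have h3 := Nat.eq_of_mul_eq_mul_right (by omega) h2
    have h4 : 0 < Fintype.card Q := Fintype.card_pos_iff.2 ⟨mk 0⟩
    omega
  have eQA : Q ≃ A := Fintype.equivOfCardEq (by rw [hQ, hA])
  have eQ' : Fin e ≃ {c : Q // c ≠ mk 0} := Fintype.equivOfCardEq (by
    rw [Fintype.card_fin, Fintype.card_subtype_compl, hQ, Fintype.card_subtype_eq]; rfl)
  have hu : ∀ i, ∃ y, mk y = (eQ' i).1 := fun i => Quotient.exists_rep _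
  choose u hu using hu
  refine ⟨Finset.univ.image fun g : H => ((g : Fˣ) : F), fun x => eQA (mk x), u, ?_, ?_, ?_, ?_⟩
  · rw [Finset.card_image_of_injective, Finset.card_univ, hH]
    intro g g' h
    exact Subtype.ext (Units.ext h)
  · intro x y h
    obtain ⟨g, hg⟩ := (hmk x y).1 (eQA.injective h)
    exact ⟨_, Finset.mem_image_of_mem _ (Finset.mem_univ g), hg.symm⟩
  · intro i h
    apply (eQ' i).2
    rw [← hu i, h]
  · intro g hg i j h
    obtain ⟨g, _, rfl⟩ := Finset.mem_image.1 hg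
    have : mk (u i) = mk (u j) := (hmk _ _).2 ⟨g, h.symm⟩
    rw [hu, hu] at this
    exact eQ'.injective (Subtype.ext this)

lemma exists_fields (q m : ℕ) (hq : IsPrimePow q) (hm : 1 ≤ m) :
    ∃ (F K : Type) (_ : Field F) (_ : Field K) (_ : Algebra F K) (_ : Fintype F) (_ : Fintype K),
      Fintype.card F = q ∧ Fintype.card K = q ^ m ∧ Module.finrank F K = m := by
  obtain ⟨p, k, hp, hk, rfl⟩ := hq
  have : Fact p.Prime := ⟨hp.nat_prime⟩
  have : NeZero m := ⟨by omega⟩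
  have hF : Nat.card (GaloisField p k) = p ^ k := GaloisField.card p k hk.ne'
  refine ⟨GaloisField p k, FiniteField.Extension (GaloisField p k) p m, inferInstance,
    inferInstance, inferInstance, Fintype.ofFinite _, Fintype.ofFinite _, ?_, ?_, ?_⟩
  · rw [← hF]
    exact (@Nat.card_eq_fintype_card _ (_)).symm
  · rw [← hF, ← FiniteField.natCard_extension (GaloisField p k) p m]
    exact (@Nat.card_eq_fintype_card _ (_)).symm
  · exact FiniteField.finrank_extension _ _ _

lemma base_set (q r m t e : ℕ) (hq : IsPrimePow q) (hm : 1 ≤ m) (ht : t ≤ m - 1)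
    (hr : r ∣ q - 1) (hr2 : 2 ≤ r) (he : e * r + 1 = q ^ (m - t))
    (A : Type*) [Fintype A] [DecidableEq A] (hA : Fintype.card A = e + 1) :
    ∃ S : Fin e → Fin (q ^ m - 1) → A,
      (∀ i j (τ : Fin (q ^ m - 1)), ¬ (i = j ∧ (τ : ℕ) = 0) →
        Hcorr (S i) (S j) τ ≤ r * q ^ t) ∧
      ∀ a, (Finset.univ.filter fun p : Fin e × Fin (q ^ m - 1) => S p.1 p.2 = a).card
        ≤ e * (r * q ^ t) := by
  obtain ⟨F, K, _, _, _, _, _, hF, hK, hfr⟩ := exists_fields q m hq hm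
  have hq0 : 0 < q := hq.pos
  let V := Fin (m - t) → F
  have hVc : Fintype.card V = e * r + 1 := by
    rw [he, Fintype.card_fun, Fintype.card_fin, hF]
  obtain ⟨G, cls, u, hG, hcls, hu0, hu⟩ :=
    exists_classes F V r e (by rwa [hF]) hr2 hVc A hA
  -- a surjective linear map
  obtain ⟨L, hL⟩ : ∃ L : K →ₗ[F] V, Function.Surjective L := by
    have hfd : Module.Finite F K := Module.Finite.of_finite
    let eK : K ≃ₗ[F] (Fin m → F) := LinearEquiv.ofFinrankEq _ _ (by rw [hfr]; simp)
    refine ⟨(LinearMap.funLeft F F (Fin.castLE (by omega : m - t ≤ m))).comp eK.toLinearMap, ?_⟩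
    rw [LinearMap.coe_comp]
    exact (LinearMap.funLeft_surjective_of_injective F F _ (Fin.castLE_injective _)).comp
      eK.surjective
  have hfib : ∀ w : V, (Finset.univ.filter fun x => L x = w).card = q ^ t := by
    have h0 : ∀ w : V, (Finset.univ.filter fun x => L x = w).card =
        (Finset.univ.filter fun x => L x = 0).card := by
      intro w
      obtain ⟨y, hy⟩ := hL w
      refine Finset.card_bij (fun x _ => x - y) ?_ ?_ ?_
      · intro x hx
        simp only [Finset.mem_filter, Finset.mem_univ, true_and] at hx ⊢
        simp [hx, hy]
      · intro x _ x' _ h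
        simpa using h
      · intro x hx
        simp only [Finset.mem_filter, Finset.mem_univ, true_and] at hx
        exact ⟨x + y, by simp [hx, hy], by simp⟩
    have h1 : Fintype.card K = ∑ w : V, (Finset.univ.filter fun x => L x = w).card := by
      rw [← Finset.card_univ]
      exact Finset.card_eq_sum_card_fiberwise (fun _ _ => Finset.mem_coe.2 (Finset.mem_univ _))
    rw [Finset.sum_congr rfl (fun w _ => h0 w), Finset.sum_const, Finset.card_univ, hVc, he, hK,
      smul_eq_mul] at h1
    intro w
    rw [h0 w]
    have h2 : q ^ m = q ^ (m - t) * q ^ t := by rw [← pow_add]; congr 1; omega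
    rw [h2] at h1
    exact (Nat.eq_of_mul_eq_mul_left (pow_pos hq0 _) h1).symm
  -- primitive element
  obtain ⟨α, hα⟩ := IsCyclic.exists_ofOrder_eq_natCard (α := Kˣ)
  have hord : orderOf α = q ^ m - 1 := by
    rw [hα, Nat.card_eq_fintype_card, Fintype.card_units, hK]
  let a : Fin (q ^ m - 1) → K := fun k => ((α ^ (k : ℕ) : Kˣ) : K)
  have hainj : Function.Injective a := by
    intro k k' h
    have h1 : α ^ (k : ℕ) = α ^ (k' : ℕ) := Units.ext h
    have h2 := (pow_inj_mod (x := α)).1 h1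
    rw [hord, Nat.mod_eq_of_lt k.2, Nat.mod_eq_of_lt k'.2] at h2
    exact Fin.ext h2
  have hadd : ∀ k τ, a (k + τ) = a τ * a k := by
    intro k τ
    simp only [a, Fin.val_add]
    have h := pow_mod_orderOf α ((k : ℕ) + τ)
    rw [hord] at h
    rw [← Units.val_mul, ← pow_add, h, add_comm]
  refine ⟨fun i k => cls (L (a k) + u i), ?_, ?_⟩
  · intro i j τ hτ
    have hsub : (Finset.univ.filter fun k => cls (L (a k) + u i) = cls (L (a (k + τ)) + u j)) ⊆
        G.biUnion fun g => Finset.univ.filter fun k =>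
          L (a k) + u i = g • (L (a (k + τ)) + u j) := by
      intro k hk
      simp only [Finset.mem_filter, Finset.mem_univ, true_and, Finset.mem_biUnion] at hk ⊢
      exact hcls _ _ hk
    unfold Hcorr
    refine (Finset.card_le_card hsub).trans ?_
    refine (Finset.card_biUnion_le_card_mul _ _ (q ^ t) ?_).trans (by rw [hG])
    intro g hg
    have hrew : ∀ k, L (a k) + u i = g • (L (a (k + τ)) + u j) →
        L ((1 - algebraMap F K g * a τ) * a k) = g • u j - u i := by
      intro k hk
      have : (1 - algebraMap F K g * a τ) * a k = a k - g • a (k + τ) := by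
        rw [hadd, Algebra.smul_def]; ring
      rw [this, map_sub, map_smul, sub_eq_sub_iff_add_eq_add, hk, smul_add, add_comm]
    by_cases hz : 1 - algebraMap F K g * a τ = 0
    · have : (Finset.univ.filter fun k => L (a k) + u i = g • (L (a (k + τ)) + u j)) = ∅ := by
        rw [Finset.filter_eq_empty_iff]
        intro k _ hk
        have h1 := hrew k hk
        rw [hz, zero_mul, map_zero] at h1
        have h2 : u i = g • u j := (sub_eq_zero.1 h1.symm).symm
        have h3 := hu g hg i j h2
        subst h3
        have h4 : (1 : F) = g := smul_left_injective F (hu0 i) (by simpa using h2)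
        rw [← h4, map_one, one_mul, sub_eq_zero] at hz
        refine hτ ⟨rfl, ?_⟩
        have h5 : α ^ (τ : ℕ) = 1 := Units.ext hz.symm
        have h6 := orderOf_dvd_of_pow_eq_one h5
        rw [hord] at h6
        exact Nat.eq_zero_of_dvd_of_lt h6 τ.2
      rw [this]
      simp
    · rw [← hfib (g • u j - u i)]
      refine Finset.card_le_card_of_injOn (fun k => (1 - algebraMap F K g * a τ) * a k) ?_ ?_
      · intro k hk
        simp only [Finset.coe_filter, Finset.mem_univ, true_and, Set.mem_ofPred_eq] at hk ⊢
        exact hrew k hk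
      · intro k _ k' _ h
        exact hainj (mul_left_cancel₀ hz h)
  · intro c
    have hi : ∀ i, (Finset.univ.filter fun k => cls (L (a k) + u i) = c).card ≤ r * q ^ t := by
      intro i
      by_cases hex : ∃ k0, cls (L (a k0) + u i) = c
      · obtain ⟨k0, rfl⟩ := hex
        have hsub : (Finset.univ.filter fun k => cls (L (a k) + u i) = cls (L (a k0) + u i)) ⊆
            G.biUnion fun g => Finset.univ.filter fun k =>
              L (a k) = g • (L (a k0) + u i) - u i := by
          intro k hk
          simp only [Finset.mem_filter, Finset.mem_univ, true_and, Finset.mem_biUnion] at hk ⊢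
          obtain ⟨g, hg, h⟩ := hcls _ _ hk
          exact ⟨g, hg, by rw [← h]; simp⟩
        refine (Finset.card_le_card hsub).trans ?_
        refine (Finset.card_biUnion_le_card_mul _ _ (q ^ t) ?_).trans (by rw [hG])
        intro g hg
        rw [← hfib (g • (L (a k0) + u i) - u i)]
        refine Finset.card_le_card_of_injOn a ?_ hainj.injOn
        intro k hk
        simpa using hk
      · push Not at hex
        rw [Finset.filter_eq_empty_iff.2 (fun k _ => hex k)]
        simp
    simp only [Finset.card_filter, Fintype.sum_prod_type] at hi ⊢
    refine (Finset.sum_le_sum fun i _ => hi i).trans ?_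
    simp

/-- recursive optimality: from an optimal `(q^m-1, e, r q^t; e+1)` FHS
set achieving the Peng–Fan bound and an `(n, s; v)` OC sequence set with
`s > q^m - q^t - 1`, if the Peng–Fan ceilings for the old and new parameters agree,
then there is an optimal `(n(q^m-1), e, r q^t; v(e+1))` FHS set achieving the
Peng–Fan bound. -/
theorem stmt17 (q r m t e n s v : ℕ) (hq : IsPrimePow q) (hm : 1 ≤ m) (ht : t ≤ m - 1)
    (hr : r ∣ q - 1) (hr2 : 2 ≤ r) (he : e * r + 1 = q ^ (m - t)) (hn : 1 ≤ n)
    (A B : Type*) [Fintype A] [DecidableEq A] [Fintype B] [DecidableEq B]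
    (hA : Fintype.card A = e + 1) (hB : Fintype.card B = v)
    (S : Fin e → Fin (q ^ m - 1) → A) (hSinj : Function.Injective S)
    (hSH : HmMax S = r * q ^ t)
    (hSopt : ((r * q ^ t : ℕ) : ℤ) =
      ⌈((((q : ℚ) ^ m - 1) * e - ((e : ℚ) + 1)) / (((q : ℚ) ^ m - 1) * e - 1)) *
        (((q : ℚ) ^ m - 1) / ((e : ℚ) + 1))⌉)
    (C : Fin s → Fin n → B) (hCinj : Function.Injective C)
    (hCnonrep : ∀ i : Fin s, Function.Injective (C i))
    (hCcross : ∀ i j : Fin s, i ≠ j → ∀ τ : Fin n, Hcorr (C i) (C j) τ ≤ 1)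
    (hs : q ^ m - q ^ t - 1 < s)
    (hceil : ⌈(((n : ℚ) * ((q : ℚ) ^ m - 1) * e - (v : ℚ) * ((e : ℚ) + 1)) /
          ((n : ℚ) * ((q : ℚ) ^ m - 1) * e - 1)) *
          (((n : ℚ) * ((q : ℚ) ^ m - 1)) / ((v : ℚ) * ((e : ℚ) + 1)))⌉ =
        ⌈((((q : ℚ) ^ m - 1) * e - ((e : ℚ) + 1)) / (((q : ℚ) ^ m - 1) * e - 1)) *
          (((q : ℚ) ^ m - 1) / ((e : ℚ) + 1))⌉) :
    ∃ X : Fin e → Fin (n * (q ^ m - 1)) → A × B, Function.Injective X ∧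
      HmMax X = r * q ^ t ∧
      ((HmMax X : ℕ) : ℤ) =
        ⌈(((n : ℚ) * ((q : ℚ) ^ m - 1) * e - (v : ℚ) * ((e : ℚ) + 1)) /
          ((n : ℚ) * ((q : ℚ) ^ m - 1) * e - 1)) *
          (((n : ℚ) * ((q : ℚ) ^ m - 1)) / ((v : ℚ) * ((e : ℚ) + 1)))⌉ := by
  have hq0 : 0 < q := hq.pos
  have hq2 : 2 ≤ q := hq.two_le
  have hqm : 1 < q ^ m := Nat.one_lt_pow (by omega) (by omega)
  have : NeZero (q ^ m - 1) := ⟨by omega⟩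
  have : NeZero n := ⟨by omega⟩
  have : NeZero (n * (q ^ m - 1)) := ⟨Nat.mul_ne_zero (by omega) (by omega)⟩
  have he0 : 0 < e := by
    rcases Nat.eq_zero_or_pos e with h | h
    · have h1 : 1 < q ^ (m - t) := Nat.one_lt_pow (by omega) (by omega)
      rw [← he, h] at h1
      omega
    · exact h
  obtain ⟨S', hS', hap⟩ := base_set q r m t e hq hm ht hr hr2 he A hA
  have hes : e * (r * q ^ t) ≤ s := by
    have h1 : q ^ m = q ^ (m - t) * q ^ t := by rw [← pow_add]; congr 1; omega
    have h2 : q ^ m = e * (r * q ^ t) + q ^ t := by rw [h1, ← he]; ring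
    omega
  obtain ⟨X, hXinj, hX⟩ := recursive_lemma S' (r * q ^ t) hS' (fun a => (hap a).trans hes)
    C hCinj hCnonrep hCcross
  have hub : HmMax X ≤ r * q ^ t := (HmMax_le_iff X _).2 (fun i j τ h => by
    convert hX i j τ h)
  have hpf := peng_fan X
  rw [Fintype.card_prod, hA, hB] at hpf
  have hnew := hceil.trans hSopt.symm
  have hlb : ⌈(((n : ℚ) * ((q : ℚ) ^ m - 1) * e - (v : ℚ) * ((e : ℚ) + 1)) /
          ((n : ℚ) * ((q : ℚ) ^ m - 1) * e - 1)) *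
          (((n : ℚ) * ((q : ℚ) ^ m - 1)) / ((v : ℚ) * ((e : ℚ) + 1)))⌉ ≤ ((HmMax X : ℕ) : ℤ) := by
    rw [Int.ceil_le]
    have hP : (n : ℚ) * ((q : ℚ) ^ m - 1) = ((n * (q ^ m - 1) : ℕ) : ℚ) := by
      rw [Nat.cast_mul, Nat.cast_sub (by omega)]; push_cast; ring
    have hl : (v : ℚ) * ((e : ℚ) + 1) = (((e + 1) * v : ℕ) : ℚ) := by push_cast; ring
    rw [hP, hl]
    have hLpos : 0 < n * (q ^ m - 1) := Nat.mul_pos (by omega) (by omega)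
    generalize n * (q ^ m - 1) = P at *
    generalize (e + 1) * v = l at *
    generalize HmMax X = b at *
    rw [Int.cast_natCast]
    have hb0 : (0 : ℚ) ≤ b := Nat.cast_nonneg _
    rw [div_mul_div_comm]
    have hPe : (1 : ℚ) ≤ (P : ℚ) * e := by exact_mod_cast Nat.mul_pos hLpos he0
    rcases hPe.eq_or_lt with h | h
    · rw [← h]; simpa using hb0
    rcases Nat.eq_zero_or_pos l with h0 | h0
    · rw [h0]; simpa using hb0
    have h0' : (0 : ℚ) < l := by exact_mod_cast h0
    rw [div_le_iff₀ (mul_pos (by linarith) h0')]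
    have hpf' : ((e : ℚ) * P) ^ 2 + l * (e * b) ≤ l * (e * P + e * e * P * b) := by
      exact_mod_cast hpf
    have he0' : (0 : ℚ) < e := by exact_mod_cast he0
    refine le_of_mul_le_mul_left ?_ he0'
    nlinarith
  rw [hnew] at hlb
  have hEq : HmMax X = r * q ^ t := le_antisymm hub (by exact_mod_cast hlb)
  exact ⟨X, hXinj, hEq, by rw [hEq, hnew]⟩
end

section
/- For a single sequence s = (φ(θ^k + α))_{k=0}^{q^m−2} from the main construction with r ≥ 2 and α = α_i ∉ V (2 ≤ i ≤ ℓ), the Hamming autocorrelation H_{s,s}(τ) is at most r·q^t for all 1 ≤ τ ≤ q^m − 2; consequently s is a (q^m − 1, r·q^t) frequency hopping sequence over an alphabet of size (q^{m-t}−1)/r + 1. -/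
open Polynomial Finset
open scoped Classical

/-- The polynomial `φ(x) = ∏_{g ∈ G} ∏_{β ∈ V} (x + g + β)`. -/
noncomputable def phiPoly {Fq K : Type*} [Field Fq] [Field K] [Fintype K] [Algebra Fq K]
    (G : Subgroup Kˣ) (V : Submodule Fq K) : Polynomial K :=
  ∏ g : G, ∏ β : V, (X + C ((g : Kˣ) : K) + C (β : K))


/-- `L(x) = ∏_{β ∈ V} (x + β)`. -/
noncomputable def LPoly {Fq K : Type*} [Field Fq] [Field K] [Fintype K] [Algebra Fq K]
    (V : Submodule Fq K) : Polynomial K := ∏ β : V, (X + C (β : K))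

section aux
variable {Fq K : Type*} [Field Fq] [Field K] [Fintype K] [Algebra Fq K]

lemma monic_agree {p s : Polynomial K} {n : ℕ} (hp : p.Monic) (hs : s.Monic)
    (hpn : p.natDegree = n) (hsn : s.natDegree = n) (S : Finset K) (hS : n ≤ S.card)
    (h : ∀ x ∈ S, p.eval x = s.eval x) : p = s := by
  apply Polynomial.eq_of_degree_sub_lt_of_eval_finset_eq S _ h
  have h1 : (p - s).degree < p.degree := by
    apply Polynomial.degree_sub_lt
    · rw [Polynomial.degree_eq_natDegree hp.ne_zero, Polynomial.degree_eq_natDegree hs.ne_zero,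
        hpn, hsn]
    · exact hp.ne_zero
    · rw [hp.leadingCoeff, hs.leadingCoeff]
  rw [Polynomial.degree_eq_natDegree hp.ne_zero, hpn] at h1
  exact lt_of_lt_of_le h1 (by exact_mod_cast hS)

lemma LPoly_monic (V : Submodule Fq K) : (LPoly V).Monic :=
  monic_prod_of_monic _ _ fun _ _ => monic_X_add_C _

lemma LPoly_natDegree (V : Submodule Fq K) : (LPoly V).natDegree = Fintype.card V := by
  unfold LPoly
  rw [natDegree_prod_of_monic _ _ fun _ _ => monic_X_add_C _]
  simp

lemma LPoly_eval (V : Submodule Fq K) (x : K) : (LPoly V).eval x = ∏ β : V, (x + (β : K)) := by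
  simp [LPoly, eval_prod]

lemma LPoly_eval_eq_zero (V : Submodule Fq K) (x : K) : (LPoly V).eval x = 0 ↔ x ∈ V := by
  rw [LPoly_eval, Finset.prod_eq_zero_iff]
  constructor
  · rintro ⟨β, -, h⟩
    rw [eq_neg_of_add_eq_zero_left h]
    exact V.neg_mem β.2
  · intro h
    exact ⟨-⟨x, h⟩, Finset.mem_univ _, by simp⟩

lemma LPoly_eval_add (V : Submodule Fq K) (x v : K) (hv : v ∈ V) :
    (LPoly V).eval (x + v) = (LPoly V).eval x := by
  rw [LPoly_eval, LPoly_eval]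
  apply Fintype.prod_equiv (Equiv.addLeft (⟨v, hv⟩ : V))
  intro β
  simp [add_assoc]

lemma LPoly_comp (V : Submodule Fq K) (a : K) :
    (LPoly V).comp (X + C a) = LPoly V + C ((LPoly V).eval a) := by
  by_cases hV : Fintype.card V = 0
  · exact absurd hV Fintype.card_ne_zero
  have hdeg : (C ((LPoly V).eval a)).degree < (LPoly V).degree := by
    rw [Polynomial.degree_eq_natDegree (LPoly_monic V).ne_zero, LPoly_natDegree]
    refine lt_of_le_of_lt degree_C_le ?_
    exact_mod_cast Nat.pos_of_ne_zero hV
  apply monic_agree (n := Fintype.card V) ((LPoly_monic V).comp_X_add_C a)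
    ((LPoly_monic V).add_of_left hdeg) _ _ (Finset.univ.image (fun v : V => (v : K)))
  · rw [Finset.card_image_of_injective _ Subtype.val_injective]; simp
  · intro x hx
    obtain ⟨v, -, rfl⟩ := Finset.mem_image.1 hx
    simp only [eval_comp, eval_add, eval_X, eval_C]
    rw [add_comm (v : K) a, LPoly_eval_add V a v v.2, (LPoly_eval_eq_zero V v).2 v.2, zero_add]
  · rw [natDegree_comp, LPoly_natDegree]; simp
  · rw [natDegree_add_eq_left_of_degree_lt hdeg, LPoly_natDegree]

lemma LPoly_eval_smul (V : Submodule Fq K) (a : Fq) (ha : a ≠ 0) (x : K) :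
    (LPoly V).eval (algebraMap Fq K a * x)
      = (algebraMap Fq K a) ^ Fintype.card V * (LPoly V).eval x := by
  rw [LPoly_eval, LPoly_eval, ← Finset.card_univ, ← Finset.prod_const, ← Finset.prod_mul_distrib]
  symm
  apply Fintype.prod_equiv (LinearEquiv.smulOfNeZero Fq V a ha).toEquiv
  intro β
  simp [Algebra.smul_def, mul_add]

lemma LPoly_deriv (V : Submodule Fq K) (a : K) : (derivative (LPoly V)).eval a ≠ 0 := by
  have h1 := congrArg (fun p => (derivative p).eval 0) (LPoly_comp V a)
  simp [derivative_comp] at h1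
  rw [h1]
  have hsep : (LPoly V).Separable := by
    have : LPoly V = ∏ β : V, (X - C (-(β : K))) := by simp [LPoly]
    rw [this, Polynomial.separable_prod_X_sub_C_iff]
    intro x y h
    exact Subtype.val_injective (neg_injective h)
  have h0 : (LPoly V).eval 0 = 0 := (LPoly_eval_eq_zero V 0).2 V.zero_mem
  have := hsep.eval₂_derivative_ne_zero (RingHom.id K) (x := 0) h0
  exact this

lemma prod_G (G : Subgroup Kˣ) (b : K) :
    ∏ g : G, (X + C (((g : Kˣ) : K) * b))
      = (X : K[X]) ^ Fintype.card G + C (-(-b) ^ Fintype.card G) := by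
  by_cases hb : b = 0
  · subst hb
    simp [Fintype.card_ne_zero]
  apply monic_agree (n := Fintype.card G) (monic_prod_of_monic _ _ fun _ _ => monic_X_add_C _)
    (monic_X_pow_add_C _ Fintype.card_ne_zero) _ _
    (Finset.univ.image (fun g : G => -(((g : Kˣ) : K) * b)))
  · rw [Finset.card_image_of_injective]
    · simp
    · intro g h hgh
      simpa [hb, Units.val_inj] using hgh
  · intro x hx
    obtain ⟨g, -, rfl⟩ := Finset.mem_image.1 hx
    rw [eval_prod, Finset.prod_eq_zero (Finset.mem_univ g) (by simp)]
    have hg : (((g : Kˣ) : K)) ^ Fintype.card G = 1 := by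
      have : g ^ Fintype.card G = 1 := pow_card_eq_one
      rw [← Units.val_pow_eq_pow_val, ← Subgroup.coe_pow, this]; rfl
    simp only [eval_add, eval_pow, eval_X, eval_C]
    rw [← mul_neg, mul_pow, hg]; ring
  · rw [natDegree_prod_of_monic _ _ fun _ _ => monic_X_add_C _]
    simp only [natDegree_X_add_C]
    simp
  · exact natDegree_X_pow_add_C

lemma phiPoly_eq (V : Submodule Fq K) (G : Subgroup Kˣ) :
    phiPoly G V = ∏ g : G, (LPoly V).comp (X + C ((g : Kˣ) : K)) := by
  unfold phiPoly LPoly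
  refine Finset.prod_congr rfl fun g _ => ?_
  rw [Polynomial.prod_comp]
  simp

lemma phiPoly_natDegree (V : Submodule Fq K) (G : Subgroup Kˣ) :
    (phiPoly G V).natDegree = Fintype.card G * Fintype.card V := by
  rw [phiPoly_eq, natDegree_prod_of_monic _ _ fun g _ => (LPoly_monic V).comp_X_add_C _]
  simp [natDegree_comp, LPoly_natDegree]

lemma smul_const [Fintype Fq] (V : Submodule Fq K) (a : Fq) :
    (algebraMap Fq K a) ^ Fintype.card V = algebraMap Fq K a := by
  rw [Module.card_eq_pow_finrank (K := Fq) (V := V), ← map_pow, FiniteField.pow_card_pow]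

lemma LPoly_eval_G [Fintype Fq] (V : Submodule Fq K) (G : Subgroup Kˣ)
    (hGsub : ∀ g : G, ∃ a : Fq, algebraMap Fq K a = ((g : Kˣ) : K)) (g : G) (x : K) :
    (LPoly V).eval (((g : Kˣ) : K) * x) = ((g : Kˣ) : K) * (LPoly V).eval x := by
  obtain ⟨a, ha⟩ := hGsub g
  have ha0 : a ≠ 0 := by
    rintro rfl
    rw [map_zero] at ha
    exact (g : Kˣ).ne_zero ha.symm
  rw [← ha, LPoly_eval_smul V a ha0, smul_const]

lemma phiPoly_form [Fintype Fq] (V : Submodule Fq K) (G : Subgroup Kˣ)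
    (hGsub : ∀ g : G, ∃ a : Fq, algebraMap Fq K a = ((g : Kˣ) : K)) :
    ∃ c : K, phiPoly G V = (LPoly V) ^ Fintype.card G + C c := by
  refine ⟨-(-(LPoly V).eval 1) ^ Fintype.card G, ?_⟩
  have h := congrArg (fun p => p.comp (LPoly V)) (prod_G G ((LPoly V).eval 1))
  simp only [Polynomial.prod_comp, add_comp, X_comp, C_comp, pow_comp] at h
  rw [← h, phiPoly_eq]
  refine Finset.prod_congr rfl fun g _ => ?_
  rw [LPoly_comp, ← LPoly_eval_G V G hGsub, mul_one]

lemma phiPoly_inv [Fintype Fq] (V : Submodule Fq K) (G : Subgroup Kˣ)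
    (hGsub : ∀ g : G, ∃ a : Fq, algebraMap Fq K a = ((g : Kˣ) : K)) (g : G) (x v : K)
    (hv : v ∈ V) :
    (phiPoly G V).eval (x * ((g : Kˣ) : K) + v) = (phiPoly G V).eval x := by
  obtain ⟨c, hc⟩ := phiPoly_form V G hGsub
  have hg : (((g : Kˣ) : K)) ^ Fintype.card G = 1 := by
    have : g ^ Fintype.card G = 1 := pow_card_eq_one
    rw [← Units.val_pow_eq_pow_val, ← Subgroup.coe_pow, this]; rfl
  simp only [hc, eval_add, eval_pow, eval_C]
  rw [LPoly_eval_add V _ v hv, mul_comm x, LPoly_eval_G V G hGsub, mul_pow, hg, one_mul]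

lemma phiPoly_deriv [Fintype Fq] (V : Submodule Fq K) (G : Subgroup Kˣ)
    (hGsub : ∀ g : G, ∃ a : Fq, algebraMap Fq K a = ((g : Kˣ) : K)) (a : K) (ha : a ∉ V)
    (hr : ((Fintype.card G : ℕ) : K) ≠ 0) :
    (derivative (phiPoly G V)).eval a ≠ 0 := by
  obtain ⟨c, hc⟩ := phiPoly_form V G hGsub
  have h1 : (LPoly V).eval a ≠ 0 := fun h => ha ((LPoly_eval_eq_zero V a).1 h)
  rw [hc, derivative_add, derivative_C, add_zero, derivative_pow, eval_mul, eval_mul, eval_pow,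
    eval_C]
  exact mul_ne_zero (mul_ne_zero hr (pow_ne_zero _ h1)) (LPoly_deriv V a)

end aux

/-- for a single sequence `s = (φ(θ^k + α_i))_k` with `r ≥ 2`,
`α_i ∉ V`, the Hamming autocorrelation at every delay `1 ≤ τ ≤ q^m - 2` is at most
`r q^t`, and the sequence takes values in an alphabet of size at most
`(q^{m-t} - 1)/r + 1`. -/
theorem stmt19 (q r m t : ℕ) (hq : IsPrimePow q) (hm : 1 ≤ m) (ht : t ≤ m - 1)
    (hr : r ∣ q - 1)
    (Fq K : Type*) [Field Fq] [Fintype Fq] [Field K] [Fintype K] [Algebra Fq K]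
    (hcq : Fintype.card Fq = q) (hcK : Fintype.card K = q ^ m)
    (V : Submodule Fq K) (hV : Module.finrank Fq V = t)
    (G : Subgroup Kˣ) (hG : Nat.card G = r)
    (hGsub : ∀ g : G, ∃ a : Fq, algebraMap Fq K a = ((g : Kˣ) : K))
    (hr2 : 2 ≤ r)
    (θ : Kˣ) (hθ : ∀ x : Kˣ, x ∈ Subgroup.zpowers θ)
    (α : Fin ((q ^ (m - t) - 1) / r + 1) → K) (hα0 : α 0 = 0)
    (hne : ∀ (i : Fin ((q ^ (m - t) - 1) / r + 1)) (g : G), i ≠ 0 →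
      coset (V : Set K) (α i * ((g : Kˣ) : K)) ≠ coset (V : Set K) 0)
    (hinj : ∀ (i j : Fin ((q ^ (m - t) - 1) / r + 1)) (gi gj : G), i ≠ 0 → j ≠ 0 →
      coset (V : Set K) (α i * ((gi : Kˣ) : K)) = coset (V : Set K) (α j * ((gj : Kˣ) : K)) →
      i = j ∧ gi = gj)
    (hcover : (⋃ i, ⋃ g : G, coset (V : Set K) (α i * ((g : Kˣ) : K))) = Set.univ)
    (i : Fin ((q ^ (m - t) - 1) / r + 1)) (hi : i ≠ 0) :
    (∀ τ : ℕ, 1 ≤ τ → τ ≤ q ^ m - 2 →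
      ((Finset.range (q ^ m - 1)).filter (fun k =>
        (phiPoly G V).eval (((θ : Kˣ) : K) ^ k + α i) =
        (phiPoly G V).eval (((θ : Kˣ) : K) ^ ((k + τ) % (q ^ m - 1)) + α i))).card
          ≤ r * q ^ t) ∧
    (Finset.image (fun k => (phiPoly G V).eval (((θ : Kˣ) : K) ^ k + α i))
        (Finset.range (q ^ m - 1))).card ≤ (q ^ (m - t) - 1) / r + 1 := by
  have hcG : Fintype.card G = r := by rw [← Nat.card_eq_fintype_card, hG]
  have hcV : Fintype.card V = q ^ t := by
    rw [Module.card_eq_pow_finrank (K := Fq) (V := V), hcq, hV]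
  have hrK : ((Fintype.card G : ℕ) : K) ≠ 0 := by
    rw [hcG]
    intro h0
    obtain ⟨s, hs⟩ := hr
    have hq1 : 1 ≤ q := hq.one_lt.le
    have hqK : ((q : ℕ) : K) = 0 := by
      have h := congrArg (algebraMap Fq K) (FiniteField.cast_card_eq_zero Fq)
      rwa [map_natCast, map_zero, hcq] at h
    have h2 : q = r * s + 1 := by omega
    rw [h2] at hqK
    push_cast at hqK
    rw [h0] at hqK
    simp at hqK
  have hαV : α i ∉ V := by
    intro h
    apply hne i 1 hi
    ext x
    constructor
    · rintro ⟨v, hv, rfl⟩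
      exact ⟨α i + v, V.add_mem h hv, by simp⟩
    · rintro ⟨v, hv, rfl⟩
      exact ⟨v - α i, V.sub_mem hv h, by simp⟩
  have hord : orderOf θ = q ^ m - 1 := by
    rw [orderOf_eq_card_of_forall_mem_zpowers hθ, Nat.card_eq_fintype_card, Fintype.card_units, hcK]
  constructor
  · intro τ hτ1 hτ2
    set u : K := ((θ ^ τ : Kˣ) : K) with hu
    have hu1 : u ≠ 1 := by
      intro h
      have h' : θ ^ τ = 1 := Units.ext h
      have := Nat.le_of_dvd hτ1 (orderOf_dvd_of_pow_eq_one h')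
      omega
    set P : K[X] := (phiPoly G V).comp (X + C (α i)) - (phiPoly G V).comp (C u * X + C (α i))
      with hP
    have hP0 : P ≠ 0 := by
      intro h
      have h1 := congrArg (fun p => (derivative p).eval 0) h
      simp [hP, derivative_comp] at h1
      have h2 := phiPoly_deriv V G hGsub (α i) hαV hrK
      have h3 : (1 - u) * (derivative (phiPoly G V)).eval (α i) = 0 := by linear_combination h1
      rcases mul_eq_zero.1 h3 with h4 | h4
      · exact hu1 (sub_eq_zero.1 h4).symm
      · exact h2 h4
    have hPd : P.natDegree ≤ r * q ^ t := by
      refine (natDegree_sub_le _ _).trans (max_le ?_ ?_)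
      · rw [natDegree_comp, phiPoly_natDegree, hcG, hcV]
        simp
      · rw [natDegree_comp, phiPoly_natDegree, hcG, hcV]
        calc _ ≤ r * q ^ t * 1 := Nat.mul_le_mul_left _ natDegree_linear_le
          _ = _ := mul_one _
    refine le_trans ?_ hPd
    refine le_trans ?_ ((Multiset.toFinset_card_le P.roots).trans (card_roots' P))
    apply Finset.card_le_card_of_injOn (fun k => ((θ : Kˣ) : K) ^ k)
    · intro k hk
      have hk2 := (Finset.mem_filter.1 hk).2
      have hmod : ((θ : Kˣ) : K) ^ ((k + τ) % (q ^ m - 1)) = u * ((θ : Kˣ) : K) ^ k := by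
        have h5 : θ ^ ((k + τ) % (q ^ m - 1)) = θ ^ τ * θ ^ k := by
          rw [← hord, pow_mod_orderOf, pow_add, mul_comm]
        have h6 := congrArg (fun z : Kˣ => (z : K)) h5
        simpa [hu] using h6
      rw [hmod] at hk2
      simp only [Finset.mem_coe, Multiset.mem_toFinset]
      rw [mem_roots hP0, IsRoot.def, hP]
      simp [hk2]
    · intro k hk l hl hkl
      have hk1 := Finset.mem_range.1 (Finset.mem_filter.1 hk).1
      have hl1 := Finset.mem_range.1 (Finset.mem_filter.1 hl).1
      have h7 : θ ^ k = θ ^ l := Units.ext (by simpa using hkl)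
      rw [← hord] at hk1 hl1
      exact pow_injOn_Iio_orderOf hk1 hl1 h7
  · calc _ ≤ (Finset.univ.image (fun j => (phiPoly G V).eval (α j))).card := by
          apply Finset.card_le_card
          intro y hy
          obtain ⟨k, -, rfl⟩ := Finset.mem_image.1 hy
          have hx : ((θ : Kˣ) : K) ^ k + α i ∈
              (⋃ i, ⋃ g : G, coset (V : Set K) (α i * ((g : Kˣ) : K))) := by
            rw [hcover]; trivial
          simp only [Set.mem_iUnion] at hx
          obtain ⟨j, g, v, hv, hx⟩ := hx
          refine Finset.mem_image.2 ⟨j, Finset.mem_univ _, ?_⟩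
          simp only [hx]
          exact (phiPoly_inv V G hGsub g (α j) v hv).symm
      _ ≤ (Finset.univ : Finset (Fin ((q ^ (m - t) - 1) / r + 1))).card := Finset.card_image_le
      _ = _ := by simp
end
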